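/- arXiv:2105.12199 — 2 statements merged into one kernel-verified Lean document; each statement's English description precedes it below -/
import Mathlib

section
/- Let B be a closed hereditary *-subalgebra of a C*-algebra A, let f, g be positive functionals on B, and let f̃ (respectively g̃) denote the unique norm-preserving positive extension of f (respectively g) to A. Then: (1) f ≤ g if and only if f̃ ≤ g̃; (2) f is absolutely continuous with respect to g if and only if f̃ is absolutely continuous with respect to g̃. -/
open scoped ComplexOrder

section CStarContinuousDefs

variable {A : Type} [NonUnitalCStarAlgebra A]

/-- A (continuous) linear functional on a C⋆-algebra is positive if `0 ≤ f (a⋆ * a)` for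
every `a`. -/
def IsPosFnL (f : A →L[ℂ] ℂ) : Prop := ∀ a : A, 0 ≤ f (star a * a)

/-- Order on positive functionals: `f ≤ g` iff `g - f` is positive. -/
def FnLEL (f g : A →L[ℂ] ℂ) : Prop := IsPosFnL (g - f)

/-- Absolute continuity `f ≪ g`: `f` is the pointwise limit of an increasing sequence of
positive functionals `fₙ` with `fₙ ≤ αₙ • g` for some positive reals `αₙ`. -/
def AbsContL (f g : A →L[ℂ] ℂ) : Prop :=
  ∃ (fn : ℕ → (A →L[ℂ] ℂ)) (α : ℕ → ℝ),
    (∀ n, IsPosFnL (fn n)) ∧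
    (∀ n, 0 < α n) ∧
    (∀ n, FnLEL (fn n) (fn (n + 1))) ∧
    (∀ n, FnLEL (fn n) (((α n : ℂ)) • g)) ∧
    (∀ a : A, Filter.Tendsto (fun n => fn n a) Filter.atTop (nhds (f a)))

variable (B : NonUnitalStarSubalgebra ℂ A) [IsClosed (B : Set A)]

/-- `ft` is a norm-preserving positive extension to `A` of the positive functional `f`
defined on the closed `⋆`-subalgebra `B`. -/
def IsNormPresExt (f : ↥B →L[ℂ] ℂ) (ft : A →L[ℂ] ℂ) : Prop :=
  IsPosFnL ft ∧ (∀ b : ↥B, ft ↑b = f b) ∧ ‖ft‖ = ‖f‖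

end CStarContinuousDefs

section Helpers

open Filter Topology

lemma aux_cs {A : Type} [NonUnitalCStarAlgebra A] {h : A →L[ℂ] ℂ} (hh : IsPosFnL h) (x y : A) :
    ‖h (star x * y)‖ ≤ √((h (star x * x)).re) * √((h (star y * y)).re) := by
  let := CStarAlgebra.spectralOrder A
  have := CStarAlgebra.spectralOrderedRing A
  let p : A →ₚ[ℂ] ℂ := PositiveLinearMap.mk₀ (h : A →ₗ[ℂ] ℂ) (by
    intro a ha
    obtain ⟨c, rfl⟩ := CStarAlgebra.nonneg_iff_eq_star_mul_self.mp ha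
    exact hh c)
  exact norm_inner_le_norm (𝕜 := ℂ) (p.toPreGNS x) (p.toPreGNS y)

lemma aux_au {B : Type} [NonUnitalCStarAlgebra B] :
    ∃ u : Ultrafilter B, (∀ᶠ e in (u : Filter B), (∃ c : B, e = star c * c) ∧ ‖e‖ ≤ 1 ∧
      ∃ d : B, e - star e * e = star d * d) ∧
      (∀ b : B, Tendsto (fun e => e * b) u (𝓝 b)) ∧ (∀ b : B, Tendsto (fun e => b * e) u (𝓝 b)) := by
  let := CStarAlgebra.spectralOrder B
  have := CStarAlgebra.spectralOrderedRing B
  have hl := CStarAlgebra.increasingApproximateUnit B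
  have hle := Ultrafilter.of_le (CStarAlgebra.approximateUnit B)
  refine ⟨Ultrafilter.of (CStarAlgebra.approximateUnit B), hle ?_, fun b => ?_, fun b => ?_⟩
  · filter_upwards [hl.eventually_nonneg, hl.eventually_norm] with e he he1
    refine ⟨CStarAlgebra.nonneg_iff_eq_star_mul_self.mp he, he1, ?_⟩
    apply CStarAlgebra.nonneg_iff_eq_star_mul_self.mp
    have hsa : star e = e := IsSelfAdjoint.of_nonneg he
    obtain ⟨c, hc⟩ := CStarAlgebra.nonneg_iff_eq_star_mul_self.mp he
    rw [sub_nonneg, hsa]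
    have h2 : 0 ≤ (e : Unitization ℂ B) := Unitization.inr_nonneg_iff.mpr he
    have h1 : (e : Unitization ℂ B) ≤ 1 := by
      rw [← CStarAlgebra.norm_le_one_iff_of_nonneg _ h2]
      simpa [Unitization.norm_inr] using he1
    rw [← Unitization.inr_le_iff _ _ (by simp [IsSelfAdjoint, hsa]) (by simpa [IsSelfAdjoint])]
    have := CStarAlgebra.pow_antitone h2 h1 (show 1 ≤ 2 by norm_num)
    simpa [sq] using this
  · exact (hl.tendsto_mul_right b).mono_left hle
  · exact (hl.tendsto_mul_left b).mono_left hle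

lemma aux_norm_lim {B : Type} [NonUnitalCStarAlgebra B] {f : B →L[ℂ] ℂ} (hf : IsPosFnL f)
    {u : Ultrafilter B} (hu : ∀ᶠ e in (u : Filter B), (∃ c : B, e = star c * c) ∧ ‖e‖ ≤ 1 ∧
      ∃ d : B, e - star e * e = star d * d)
    (hr : ∀ b : B, Tendsto (fun e => e * b) u (𝓝 b)) :
    Tendsto (fun e => ‖f‖ - (f e).re) u (𝓝 0) := by
  have key : ∀ r < ‖f‖, ∀ᶠ e in (u : Filter B), r ≤ (f e).re := by
    intro r hr'
    by_cases h0 : r ≤ 0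
    · filter_upwards [hu] with e he
      obtain ⟨⟨c, rfl⟩, -⟩ := he
      exact h0.trans (hf c).1
    push Not at h0
    have hfpos : 0 < ‖f‖ := h0.trans hr'
    have hr2 : √(r * ‖f‖) < ‖f‖ := by
      rw [Real.sqrt_lt' hfpos]; nlinarith
    obtain ⟨x, hx1, hx⟩ := f.exists_lt_apply_of_lt_opNorm hr2
    have ht : Tendsto (fun e => ‖f (e * x)‖) u (𝓝 ‖f x‖) :=
      ((f.continuous.tendsto _).comp (hr x)).norm
    filter_upwards [ht.eventually (lt_mem_nhds hx), hu] with e he hue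
    obtain ⟨⟨c, hc⟩, he1, d, hd⟩ := hue
    have hsa : star e = e := by rw [hc]; simp
    have h1 := aux_cs hf e x
    rw [hsa] at h1 hd
    have h2 : (f (e * e)).re ≤ (f e).re := by
      have := (hf d).1
      rw [← hd] at this
      simp at this
      linarith
    have h3 : (f (star x * x)).re ≤ ‖f‖ := by
      calc _ ≤ ‖f (star x * x)‖ := Complex.re_le_norm _
        _ ≤ ‖f‖ * ‖star x * x‖ := f.le_opNorm _
        _ ≤ ‖f‖ * 1 := by
          gcongr
          rw [CStarRing.norm_star_mul_self]
          nlinarith [norm_nonneg x]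
        _ = _ := mul_one _
    have h4 : √(r * ‖f‖) < √((f e).re * ‖f‖) := by
      refine he.trans_le (h1.trans ?_)
      have hn : 0 ≤ (f e).re := by rw [hc]; exact (hf c).1
      rw [Real.sqrt_mul hn]
      gcongr
    have h5 := (Real.sqrt_lt_sqrt_iff (by positivity)).mp h4
    exact (lt_of_mul_lt_mul_right h5 hfpos.le).le
  rw [Metric.tendsto_nhds]
  intro ε hε
  filter_upwards [key (‖f‖ - ε / 2) (by linarith), hu] with e he hue
  have : (f e).re ≤ ‖f‖ := by
    calc _ ≤ ‖f e‖ := Complex.re_le_norm _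
      _ ≤ ‖f‖ * ‖e‖ := f.le_opNorm _
      _ ≤ ‖f‖ * 1 := by gcongr; exact hue.2.1
      _ = _ := mul_one _
  rw [Real.dist_eq, sub_zero, abs_of_nonneg (by linarith)]
  linarith

section
variable {A : Type} [NonUnitalCStarAlgebra A] [PartialOrder A] [StarOrderedRing A]

lemma aux_y {F : A →L[ℂ] ℂ} {e : A} (he : 0 ≤ e) (he1 : ‖e‖ ≤ 1) (s : A) :
    (F (star (s - s * e) * (s - s * e))).re ≤ ‖s‖ ^ 2 * (‖F‖ - (F e).re) := by
  have hsa : star e = e := IsSelfAdjoint.of_nonneg he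
  set x : A := star (s - s * e) * (s - s * e) + ((‖s‖ ^ 2 : ℝ) : ℂ) • e with hx
  have hE : 0 ≤ (e : Unitization ℂ A) := Unitization.inr_nonneg_iff.mpr he
  have hE1 : (e : Unitization ℂ A) ≤ 1 := by
    rw [← CStarAlgebra.norm_le_one_iff_of_nonneg _ hE]
    simpa [Unitization.norm_inr] using he1
  have hx0 : 0 ≤ x := add_nonneg (star_mul_self_nonneg _)
    (smul_nonneg (by exact_mod_cast sq_nonneg ‖s‖) he)
  have hxn : ‖x‖ ≤ ‖s‖ ^ 2 := by
    rw [← Unitization.norm_inr (𝕜 := ℂ),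
      CStarAlgebra.norm_le_iff_le_algebraMap _ (sq_nonneg _) (Unitization.inr_nonneg_iff.mpr hx0)]
    set E : Unitization ℂ A := (e : Unitization ℂ A) with hEdef
    set S : Unitization ℂ A := (s : Unitization ℂ A) with hSdef
    have hEs : star E = E := by rw [hEdef, ← Unitization.inr_star, hsa]
    have e1 : (x : Unitization ℂ A) = star (1 - E) * (star S * S) * (1 - E) + (‖s‖ ^ 2) • E := by
      rw [hx, Complex.coe_smul]
      simp only [Unitization.inr_add, Unitization.inr_mul, Unitization.inr_star,
        Unitization.inr_sub, Unitization.inr_smul, ← hEdef, ← hSdef, star_sub, star_mul, star_one]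
      noncomm_ring
    have e2 : star (1 - E) * (star S * S) * (1 - E) ≤ (‖s‖ ^ 2) • (star (1 - E) * (1 - E)) := by
      have := CStarAlgebra.star_left_conjugate_le_norm_smul (a := 1 - E) (b := star S * S)
        (by simp [IsSelfAdjoint])
      rwa [CStarRing.norm_star_mul_self, Unitization.norm_inr, ← sq] at this
    have e3 : star (1 - E) * (1 - E) ≤ 1 - E := by
      have := CStarAlgebra.pow_antitone (a := 1 - E) (sub_nonneg.mpr hE1) (by simpa using hE)
        (show 1 ≤ 2 by norm_num)
      simpa [sq, hEs] using this
    rw [e1, Algebra.algebraMap_eq_smul_one]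
    calc _ ≤ (‖s‖ ^ 2) • (1 - E) + (‖s‖ ^ 2) • E := by
          gcongr
          exact e2.trans (smul_le_smul_of_nonneg_left e3 (sq_nonneg _))
      _ = _ := by rw [← smul_add, sub_add_cancel]
  have h1 : (F x).re ≤ ‖F‖ * ‖s‖ ^ 2 :=
    (Complex.re_le_norm _).trans ((F.le_opNorm _).trans (by gcongr))
  rw [hx, map_add, map_smul, Complex.add_re, smul_eq_mul, Complex.re_ofReal_mul] at h1
  linarith

lemma aux_key {h F : A →L[ℂ] ℂ} (hh : IsPosFnL h) (hhF : FnLEL h F)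
    {e : A} (he : 0 ≤ e) (he1 : ‖e‖ ≤ 1) (s : A) :
    ‖h (star s * s) - h (star e * (star s * s) * e)‖ ≤
      2 * (√(‖F‖ * ‖s‖ ^ 2) * √(‖s‖ ^ 2 * (‖F‖ - (F e).re))) := by
  have hsa : star e = e := IsSelfAdjoint.of_nonneg he
  have hle : ∀ x, (h (star x * x)).re ≤ (F (star x * x)).re := by
    intro x
    have := (hhF x).1
    simp at this
    linarith
  have hb : ∀ x, ‖x‖ ≤ ‖s‖ → (h (star x * x)).re ≤ ‖F‖ * ‖s‖ ^ 2 := by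
    intro x hx
    refine (hle x).trans ((Complex.re_le_norm _).trans ((F.le_opNorm _).trans ?_))
    rw [CStarRing.norm_star_mul_self, ← sq]
    gcongr
  have hy := (hle (s - s * e)).trans (aux_y (F := F) he he1 s)
  have hse : ‖s * e‖ ≤ ‖s‖ := (norm_mul_le _ _).trans (mul_le_of_le_one_right (norm_nonneg _) he1)
  have e1 : h (star s * s) - h (star e * (star s * s) * e) =
      h (star s * (s - s * e)) + h (star (s - s * e) * (s * e)) := by
    rw [← map_sub, ← map_add]
    congr 1
    simp only [star_sub, star_mul, hsa]
    noncomm_ring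
  rw [e1]
  calc _ ≤ ‖h (star s * (s - s * e))‖ + ‖h (star (s - s * e) * (s * e))‖ := norm_add_le _ _
    _ ≤ √(‖F‖ * ‖s‖ ^ 2) * √(‖s‖ ^ 2 * (‖F‖ - (F e).re)) +
        √(‖s‖ ^ 2 * (‖F‖ - (F e).re)) * √(‖F‖ * ‖s‖ ^ 2) := by
      refine add_le_add ((aux_cs hh _ _).trans ?_) ((aux_cs hh _ _).trans ?_)
      · gcongr
        exact hb s le_rfl
      · gcongr
        exact hb _ hse
    _ = _ := by ring

lemma aux_conj_mem (B : NonUnitalStarSubalgebra ℂ A)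
    (hered : ∀ a : A, ∀ b ∈ B, 0 ≤ a → a ≤ b → a ∈ B) (e : B) (a : A) :
    star (e : A) * a * e ∈ B := by
  have ha : a ∈ Submodule.span ℂ {a : A | 0 ≤ a} := by rw [CStarAlgebra.span_nonneg]; trivial
  induction ha using Submodule.span_induction with
  | mem x hx =>
    refine hered _ (‖x‖ • (star (e : A) * e)) ?_ (star_left_conjugate_nonneg hx _)
      (CStarAlgebra.star_left_conjugate_le_norm_smul (IsSelfAdjoint.of_nonneg hx))
    rw [← Complex.coe_smul]
    exact SMulMemClass.smul_mem _ (mul_mem (star_mem (s := B) e.2) e.2)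
  | zero => simp
  | add x y _ _ hx hy => rw [mul_add, add_mul]; exact add_mem hx hy
  | smul c x _ hx => rw [mul_smul_comm, smul_mul_assoc]; exact SMulMemClass.smul_mem _ hx

lemma aux_pos_of_nonneg (B : NonUnitalStarSubalgebra ℂ A) [IsClosed (B : Set A)]
    {f : B →L[ℂ] ℂ} (hf : IsPosFnL f) (x : B) (hx : 0 ≤ (x : A)) : 0 ≤ f x := by
  have hm : CFC.sqrt (x : A) ∈ B := by
    rw [CFC.sqrt_eq_real_sqrt _ hx]
    exact cfcₙ_mem (𝕜' := ℂ) _ x.2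
  have : x = star (⟨_, hm⟩ : B) * ⟨_, hm⟩ := by
    apply Subtype.ext
    have hs : star (CFC.sqrt (x : A)) = CFC.sqrt (x : A) :=
      IsSelfAdjoint.of_nonneg (CFC.sqrt_nonneg _)
    change (x : A) = star (CFC.sqrt (x : A)) * CFC.sqrt (x : A)
    rw [hs, CFC.sqrt_mul_sqrt_self _ hx]
  rw [this]
  exact hf _

lemma aux_le_refl {f : A →L[ℂ] ℂ} : FnLEL f f := by
  intro a; simp

/-- Compression by `e ∈ B`. -/
def auxConj (B : NonUnitalStarSubalgebra ℂ A)
    (hered : ∀ a : A, ∀ b ∈ B, 0 ≤ a → a ≤ b → a ∈ B) (e : B) (a : A) : B :=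
  ⟨star (e : A) * a * e, aux_conj_mem B hered e a⟩

lemma aux_unif (B : NonUnitalStarSubalgebra ℂ A) [IsClosed (B : Set A)]
    {f : B →L[ℂ] ℂ} (hf : IsPosFnL f) {ft : A →L[ℂ] ℂ} (hft : IsNormPresExt B f ft)
    {u : Ultrafilter B} (hu : ∀ᶠ e in (u : Filter B), (∃ c : B, e = star c * c) ∧ ‖e‖ ≤ 1 ∧
      ∃ d : B, e - star e * e = star d * d)
    (hr : ∀ b : B, Tendsto (fun e => e * b) u (𝓝 b)) (s : A) (ε : ℝ) (hε : 0 < ε) :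
    ∀ᶠ e : B in (u : Filter B), ∀ h : A →L[ℂ] ℂ, IsPosFnL h → FnLEL h ft →
      ‖h (star s * s) - h (star (e : A) * (star s * s) * e)‖ < ε := by
  have h0 := aux_norm_lim hf hu hr
  have h1 : Tendsto (fun e : B => 2 * (√(‖ft‖ * ‖s‖ ^ 2) * √(‖s‖ ^ 2 * (‖ft‖ - (ft e).re)))) u
      (𝓝 0) := by
    have : Tendsto (fun e : B => 2 * (√(‖ft‖ * ‖s‖ ^ 2) * √(‖s‖ ^ 2 * (‖f‖ - (f e).re)))) u
      (𝓝 (2 * (√(‖ft‖ * ‖s‖ ^ 2) * √(‖s‖ ^ 2 * 0)))) :=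
      (((h0.const_mul _).sqrt).const_mul _).const_mul _
    simp only [mul_zero, Real.sqrt_zero] at this
    refine this.congr fun e => ?_
    rw [hft.2.2, hft.2.1 e]
  filter_upwards [h1.eventually (gt_mem_nhds hε), hu] with e he hue h hh hhf
  obtain ⟨⟨c, hc⟩, hn, -⟩ := hue
  refine (aux_key hh hhf ?_ hn s).trans_lt he
  rw [hc]
  exact star_mul_self_nonneg (c : A)

lemma aux_tend (B : NonUnitalStarSubalgebra ℂ A) [IsClosed (B : Set A)]
    (hered : ∀ a : A, ∀ b ∈ B, 0 ≤ a → a ≤ b → a ∈ B)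
    {f : B →L[ℂ] ℂ} (hf : IsPosFnL f) {ft : A →L[ℂ] ℂ} (hft : IsNormPresExt B f ft)
    {u : Ultrafilter B} (hu : ∀ᶠ e in (u : Filter B), (∃ c : B, e = star c * c) ∧ ‖e‖ ≤ 1 ∧
      ∃ d : B, e - star e * e = star d * d)
    (hr : ∀ b : B, Tendsto (fun e => e * b) u (𝓝 b)) (s : A) :
    Tendsto (fun e => f (auxConj B hered e (star s * s))) u (𝓝 (ft (star s * s))) := by
  rw [Metric.tendsto_nhds]
  intro ε hε
  filter_upwards [aux_unif B hf hft hu hr s ε hε] with e he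
  rw [dist_comm, dist_eq_norm, ← hft.2.1]
  exact he ft hft.1 aux_le_refl

lemma aux_le (B : NonUnitalStarSubalgebra ℂ A) [IsClosed (B : Set A)]
    (hered : ∀ a : A, ∀ b ∈ B, 0 ≤ a → a ≤ b → a ∈ B)
    {f g : B →L[ℂ] ℂ} (hf : IsPosFnL f) (hg : IsPosFnL g) {ft gt : A →L[ℂ] ℂ}
    (hft : IsNormPresExt B f ft) (hgt : IsNormPresExt B g gt) (h : FnLEL f g) :
    FnLEL ft gt := by
  intro s
  obtain ⟨u, hu, hr, -⟩ := aux_au (B := B)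
  have h1 := (aux_tend B hered hg hgt hu hr s).sub (aux_tend B hered hf hft hu hr s)
  refine ge_of_tendsto h1 (Eventually.of_forall fun e => ?_)
  have := aux_pos_of_nonneg B h (auxConj B hered e (star s * s))
    (star_left_conjugate_nonneg (star_mul_self_nonneg s) _)
  simpa using this

lemma aux_exists (B : NonUnitalStarSubalgebra ℂ A) [IsClosed (B : Set A)]
    (hered : ∀ a : A, ∀ b ∈ B, 0 ≤ a → a ≤ b → a ∈ B)
    {f : B →L[ℂ] ℂ} (hf : IsPosFnL f) : ∃ ft, IsNormPresExt B f ft := by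
  obtain ⟨u, hu, hr, hl⟩ := aux_au (B := B)
  have hb : ∀ a : A, ∀ᶠ e in (u : Filter B),
      f (auxConj B hered e a) ∈ Metric.closedBall (0 : ℂ) (‖f‖ * ‖a‖) := by
    intro a
    filter_upwards [hu] with e he
    rw [mem_closedBall_zero_iff]
    refine (f.le_opNorm _).trans ?_
    gcongr
    have he1 : ‖(e : A)‖ ≤ 1 := he.2.1
    calc ‖star (e : A) * a * e‖ ≤ ‖star (e : A)‖ * ‖a‖ * ‖(e : A)‖ :=
          (norm_mul_le _ _).trans (by gcongr; exact norm_mul_le _ _)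
      _ ≤ 1 * ‖a‖ * 1 := by rw [norm_star]; gcongr
      _ = ‖a‖ := by ring
  have hlim : ∀ a : A, ∃ c : ℂ, ‖c‖ ≤ ‖f‖ * ‖a‖ ∧
      Tendsto (fun e => f (auxConj B hered e a)) u (𝓝 c) := by
    intro a
    obtain ⟨c, hc, hc2⟩ := (isCompact_closedBall (0 : ℂ) (‖f‖ * ‖a‖)).ultrafilter_le_nhds
      (u.map fun e => f (auxConj B hered e a)) (by
        rw [le_principal_iff]; exact hb a)
    exact ⟨c, by simpa using hc, hc2⟩
  choose L hL1 hL2 using hlim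
  let Ll : A →ₗ[ℂ] ℂ :=
    { toFun := L
      map_add' := fun a b => by
        refine tendsto_nhds_unique (hL2 (a + b)) (((hL2 a).add (hL2 b)).congr fun e => ?_)
        rw [← map_add]
        congr 1
        apply Subtype.ext
        change star (e : A) * a * e + star (e : A) * b * e = star (e : A) * (a + b) * e
        noncomm_ring
      map_smul' := fun c a => by
        refine tendsto_nhds_unique (hL2 (c • a)) (((hL2 a).const_mul c).congr fun e => ?_)
        rw [← smul_eq_mul, ← map_smul]
        congr 1
        apply Subtype.ext
        change c • (star (e : A) * a * e) = star (e : A) * (c • a) * e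
        rw [mul_smul_comm, smul_mul_assoc] }
  let F : A →L[ℂ] ℂ := Ll.mkContinuous ‖f‖ hL1
  have hFB : ∀ b : B, F b = f b := by
    intro b
    refine tendsto_nhds_unique (hL2 b) ?_
    refine (f.continuous.tendsto b).comp ?_
    rw [tendsto_iff_norm_sub_tendsto_zero]
    have t1 : Tendsto (fun e : B => ‖b * e - b‖ + ‖e * b - b‖) u (𝓝 0) := by
      simpa using (tendsto_iff_norm_sub_tendsto_zero.mp (hl b)).add
        (tendsto_iff_norm_sub_tendsto_zero.mp (hr b))
    refine squeeze_zero' (Eventually.of_forall fun _ => norm_nonneg _) ?_ t1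
    filter_upwards [hu] with e he
    obtain ⟨⟨c, hc⟩, hn, -⟩ := he
    have hsa : star e = e := by rw [hc]; simp
    have e1 : auxConj B hered e (b : A) = star e * b * e := rfl
    rw [e1, hsa]
    calc ‖e * b * e - b‖ = ‖e * (b * e - b) + (e * b - b)‖ := by congr 1; noncomm_ring
      _ ≤ ‖e‖ * ‖b * e - b‖ + ‖e * b - b‖ :=
        (norm_add_le _ _).trans (by gcongr; exact norm_mul_le _ _)
      _ ≤ 1 * ‖b * e - b‖ + ‖e * b - b‖ := by gcongr
      _ = _ := by rw [one_mul]
  refine ⟨F, ?_, hFB, le_antisymm (Ll.mkContinuous_norm_le (norm_nonneg f) hL1) ?_⟩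
  · intro s
    refine ge_of_tendsto (hL2 (star s * s)) (Eventually.of_forall fun e => ?_)
    exact aux_pos_of_nonneg B hf (auxConj B hered e (star s * s))
      (star_left_conjugate_nonneg (star_mul_self_nonneg s) _)
  · refine f.opNorm_le_bound (norm_nonneg _) fun b => ?_
    rw [← hFB]
    exact F.le_opNorm (b : A)

lemma aux_restrict_pos (B : NonUnitalStarSubalgebra ℂ A) [IsClosed (B : Set A)]
    {f : B →L[ℂ] ℂ} {ft : A →L[ℂ] ℂ} (h : ∀ b : B, ft b = f b) (hp : IsPosFnL ft) :
    IsPosFnL f := by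
  intro b
  rw [← h]
  exact hp (b : A)

lemma aux_ac (B : NonUnitalStarSubalgebra ℂ A) [IsClosed (B : Set A)]
    (hered : ∀ a : A, ∀ b ∈ B, 0 ≤ a → a ≤ b → a ∈ B)
    {f g : B →L[ℂ] ℂ} (hf : IsPosFnL f) (hg : IsPosFnL g) {ft gt : A →L[ℂ] ℂ}
    (hft : IsNormPresExt B f ft) (hgt : IsNormPresExt B g gt) (h : AbsContL f g) :
    AbsContL ft gt := by
  obtain ⟨fn, α, hp, hα, hmono, hle, hlim⟩ := h
  choose Fn hFn using fun n => aux_exists B hered (hp n)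
  have hαg : ∀ n, IsPosFnL ((α n : ℂ) • g) := by
    intro n b
    exact mul_nonneg (by exact_mod_cast (hα n).le) (hg b)
  have hαgt : ∀ n, IsNormPresExt B ((α n : ℂ) • g) ((α n : ℂ) • gt) := by
    intro n
    refine ⟨fun b => mul_nonneg (by exact_mod_cast (hα n).le) (hgt.1 b), fun b => ?_, ?_⟩
    · simp [hgt.2.1]
    · rw [norm_smul, norm_smul, hgt.2.2]
  have hfnf : ∀ n, FnLEL (fn n) f := by
    intro n b
    have hm : Monotone fun k => fn k (star b * b) := monotone_nat_of_le_succ fun k => by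
      have := hmono k b
      simpa using this
    have := hm.ge_of_tendsto (hlim (star b * b)) n
    simpa using this
  have hFf : ∀ n, FnLEL (Fn n) ft := fun n => aux_le B hered (hp n) hf (hFn n) hft (hfnf n)
  refine ⟨Fn, α, fun n => (hFn n).1, hα,
    fun n => aux_le B hered (hp n) (hp (n + 1)) (hFn n) (hFn (n + 1)) (hmono n),
    fun n => aux_le B hered (hp n) (hαg n) (hFn n) (hαgt n) (hle n), fun a => ?_⟩
  have ha : a ∈ Submodule.span ℂ {a : A | 0 ≤ a} := by rw [CStarAlgebra.span_nonneg]; trivial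
  induction ha using Submodule.span_induction with
  | mem x hx =>
    obtain ⟨s, rfl⟩ := CStarAlgebra.nonneg_iff_eq_star_mul_self.mp hx
    obtain ⟨u, hu, hr, -⟩ := aux_au (B := B)
    rw [Metric.tendsto_nhds]
    intro ε hε
    obtain ⟨e, he⟩ := (aux_unif B hf hft hu hr s (ε / 2) (half_pos hε)).exists
    have h2 := (Metric.tendsto_nhds.mp (hlim (auxConj B hered e (star s * s)))) (ε / 2)
      (half_pos hε)
    filter_upwards [h2] with n hn
    have h3 := he (ft - Fn n) (hFf n) (fun b => by simpa using (hFn n).1 b)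
    rw [dist_comm, dist_eq_norm, ← hft.2.1, ← (hFn n).2.1] at hn
    rw [dist_comm, dist_eq_norm]
    have h4 := norm_add_le ((ft - Fn n) (star s * s) -
      (ft - Fn n) (star (e : A) * (star s * s) * e)) ((ft - Fn n) (star (e : A) * (star s * s) * e))
    rw [sub_add_cancel] at h4
    change ‖(ft - Fn n) (star (e : A) * (star s * s) * e)‖ < ε / 2 at hn
    change ‖(ft - Fn n) (star s * s)‖ < ε
    linarith
  | zero => simp
  | add x y _ _ hx hy => simpa using hx.add hy
  | smul c x _ hx => simpa using hx.const_mul c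

end

end Helpers

/-- **Corollary 2.7**: let `B` be a closed hereditary `⋆`-subalgebra of a C⋆-algebra `A`,
`f, g` positive functionals on `B`, and `f̃, g̃` (the unique) norm-preserving positive
extensions of `f, g` to `A`. Then (1) `f ≤ g ↔ f̃ ≤ g̃`, and (2) `f ≪ g ↔ f̃ ≪ g̃`. -/
theorem hereditary_extension_le_and_absCont
    {A : Type} [NonUnitalCStarAlgebra A] [PartialOrder A] [StarOrderedRing A]
    (B : NonUnitalStarSubalgebra ℂ A) [IsClosed (B : Set A)]
    (hered : ∀ a : A, ∀ b ∈ B, 0 ≤ a → a ≤ b → a ∈ B)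
    (f g : ↥B →L[ℂ] ℂ) (hf : IsPosFnL f) (hg : IsPosFnL g)
    (ft gt : A →L[ℂ] ℂ)
    (hft : IsNormPresExt B f ft) (hgt : IsNormPresExt B g gt) :
    (FnLEL f g ↔ FnLEL ft gt) ∧ (AbsContL f g ↔ AbsContL ft gt) := by
  have hres : ∀ {p q : ↥B →L[ℂ] ℂ} {pt qt : A →L[ℂ] ℂ}, (∀ b : B, pt b = p b) →
      (∀ b : B, qt b = q b) → FnLEL pt qt → FnLEL p q := by
    intro p q pt qt hp hq h
    exact aux_restrict_pos B (fun b => by simp [hp, hq]) h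
  refine ⟨⟨aux_le B hered hf hg hft hgt, hres hft.2.1 hgt.2.1⟩,
    ⟨aux_ac B hered hf hg hft hgt, ?_⟩⟩
  rintro ⟨Fn, α, hp, hα, hmono, hle, hlim⟩
  let R : (A →L[ℂ] ℂ) → (↥B →L[ℂ] ℂ) := fun F =>
    ((F : A →ₗ[ℂ] ℂ).comp (B.toSubmodule.subtype : ↥B →ₗ[ℂ] A)).mkContinuous ‖F‖
      (fun b => F.le_opNorm (b : A))
  have hR : ∀ F, ∀ b : B, F b = R F b := fun F b => rfl
  refine ⟨fun n => R (Fn n), α, fun n => aux_restrict_pos B (hR _) (hp n), hα,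
    fun n => hres (hR _) (hR _) (hmono n),
    fun n => hres (hR _) (fun b => by simp [hgt.2.1]) (hle n), fun b => ?_⟩
  rw [← hft.2.1]
  exact hlim b
end

section
/- Let M be a von Neumann algebra. The following statements are equivalent: (i) the Lebesgue decomposition of normal positive functionals over M is unique; (ii) for all normal positive functionals 𝔱, 𝔣, 𝔤 on M, the property 𝔱 ≤ 𝔣 ≪ 𝔤 implies 𝔱 ≪ 𝔤. -/
open scoped ComplexOrder

/-- Scalar multiples of elements of a von Neumann algebra stay in it. -/
instance {H : Type} [NormedAddCommGroup H] [InnerProductSpace ℂ H] [CompleteSpace H] :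
    SMulMemClass (VonNeumannAlgebra H) ℂ (H →L[ℂ] H) where
  smul_mem {M} c _x hx := M.toStarSubalgebra.smul_mem hx c

section VonNeumannDefs

variable {H : Type} [NormedAddCommGroup H] [InnerProductSpace ℂ H] [CompleteSpace H]
variable {M : VonNeumannAlgebra H}

/-- The Loewner order on bounded operators: `x ≤ y` iff `y - x` is a positive operator. -/
def OpLE (x y : H →L[ℂ] H) : Prop := (y - x).IsPositive

/-- A linear functional on a von Neumann algebra is positive if `0 ≤ 𝔣 (x⋆ * x)` for
every `x`. -/
def VNIsPos (𝔣 : ↥M →ₗ[ℂ] ℂ) : Prop := ∀ x : ↥M, 0 ≤ 𝔣 (star x * x)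

/-- Order on positive functionals: `𝔣 ≤ 𝔤` iff `𝔤 - 𝔣` is positive. -/
def VNLE (𝔣 𝔤 : ↥M →ₗ[ℂ] ℂ) : Prop := VNIsPos (𝔤 - 𝔣)

/-- A functional `𝔣` on a von Neumann algebra `M` is normal if for every norm-bounded
increasing net `x : ι → M` of positive elements of `M` having a least upper bound `xsup`
in `M` (with respect to the Loewner order), `𝔣 xsup` is the supremum of the `𝔣 (x i)`. -/
def VNIsNormal (𝔣 : ↥M →ₗ[ℂ] ℂ) : Prop :=
  ∀ (ι : Type) [Preorder ι] [IsDirected ι (· ≤ ·)] [Nonempty ι]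
    (x : ι → ↥M) (xsup : ↥M),
    (∀ i, (x i : H →L[ℂ] H).IsPositive) →
    (∀ i j, i ≤ j → OpLE (x i : H →L[ℂ] H) (x j : H →L[ℂ] H)) →
    (∃ C : ℝ, ∀ i, ‖(x i : H →L[ℂ] H)‖ ≤ C) →
    (∀ i, OpLE (x i : H →L[ℂ] H) (xsup : H →L[ℂ] H)) →
    (∀ y : ↥M, (∀ i, OpLE (x i : H →L[ℂ] H) (y : H →L[ℂ] H)) →
      OpLE (xsup : H →L[ℂ] H) (y : H →L[ℂ] H)) →
    IsLUB (Set.range fun i => 𝔣 (x i)) (𝔣 xsup)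

/-- Absolute continuity `𝔣 ≪ 𝔤` for normal positive functionals: `𝔣` is the pointwise
limit of an increasing sequence of normal positive functionals `𝔣ₙ` with `𝔣ₙ ≤ αₙ • 𝔤`
for some positive reals `αₙ`. -/
def VNAbsCont (𝔣 𝔤 : ↥M →ₗ[ℂ] ℂ) : Prop :=
  ∃ (fn : ℕ → (↥M →ₗ[ℂ] ℂ)) (α : ℕ → ℝ),
    (∀ n, VNIsPos (fn n) ∧ VNIsNormal (fn n)) ∧
    (∀ n, 0 < α n) ∧
    (∀ n, VNLE (fn n) (fn (n + 1))) ∧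
    (∀ n, VNLE (fn n) (((α n : ℂ)) • 𝔤)) ∧
    (∀ x : ↥M, Filter.Tendsto (fun n => fn n x) Filter.atTop (nhds (𝔣 x)))

/-- Singularity `𝔣 ⊥ 𝔤`: the only normal positive functional dominated by both `𝔣` and
`𝔤` is `0`. -/
def VNSingular (𝔣 𝔤 : ↥M →ₗ[ℂ] ℂ) : Prop :=
  ∀ p : ↥M →ₗ[ℂ] ℂ, VNIsPos p → VNIsNormal p → VNLE p 𝔣 → VNLE p 𝔤 → p = 0

/-- `𝔣 = 𝔣r + 𝔣s` is a Lebesgue decomposition of `𝔣` with respect to `𝔤` within the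
normal positive functionals. -/
def VNIsLebDecomp (𝔣 𝔤 𝔣r 𝔣s : ↥M →ₗ[ℂ] ℂ) : Prop :=
  VNIsPos 𝔣r ∧ VNIsNormal 𝔣r ∧ VNIsPos 𝔣s ∧ VNIsNormal 𝔣s ∧
    𝔣 = 𝔣r + 𝔣s ∧ VNAbsCont 𝔣r 𝔤 ∧ VNSingular 𝔣s 𝔤

end VonNeumannDefs

section VonNeumannGlobal

variable {H : Type} [NormedAddCommGroup H] [InnerProductSpace ℂ H] [CompleteSpace H]

/-- The Lebesgue decomposition of normal positive functionals over the von Neumann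
algebra `M` is unique. -/
def VNLebDecompUnique (M : VonNeumannAlgebra H) : Prop :=
  ∀ 𝔣 𝔤 : ↥M →ₗ[ℂ] ℂ, VNIsPos 𝔣 → VNIsNormal 𝔣 → VNIsPos 𝔤 → VNIsNormal 𝔤 →
    ∀ 𝔣r 𝔣s 𝔣r' 𝔣s' : ↥M →ₗ[ℂ] ℂ,
      VNIsLebDecomp 𝔣 𝔤 𝔣r 𝔣s → VNIsLebDecomp 𝔣 𝔤 𝔣r' 𝔣s' → 𝔣r = 𝔣r' ∧ 𝔣s = 𝔣s'

/-- A von Neumann algebra is finite if `x⋆x = 1` implies `xx⋆ = 1`. -/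
def VNFinite (M : VonNeumannAlgebra H) : Prop :=
  ∀ x : ↥M, star x * x = 1 → x * star x = 1

end VonNeumannGlobal

section Helpers

open ContinuousLinearMap InnerProductSpace Filter Topology

variable {H : Type} [NormedAddCommGroup H] [InnerProductSpace ℂ H] [CompleteSpace H]
variable {M : VonNeumannAlgebra H}

/-- Positive elements of `M` have the form `w⋆ w` with `w` in `M`. -/
lemma vn_exists_sqrt (a : ↥M) (ha : (a : H →L[ℂ] H).IsPositive) : ∃ w : ↥M, a = star w * w := by
  have h0 : (0 : H →L[ℂ] H) ≤ a := (nonneg_iff_isPositive _).2 ha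
  have hmem : CFC.sqrt (a : H →L[ℂ] H) ∈ M := by
    suffices hs : CFC.sqrt (a : H →L[ℂ] H) ∈ M.commutant.commutant by
      rwa [VonNeumannAlgebra.commutant_commutant] at hs
    rw [VonNeumannAlgebra.mem_commutant_iff]
    intro g hg
    rw [VonNeumannAlgebra.mem_commutant_iff] at hg
    have hc : Commute (a : H →L[ℂ] H) g := hg a a.2
    exact ((hc.cfcₙ_nnreal NNReal.sqrt).eq).symm
  refine ⟨⟨_, hmem⟩, ?_⟩
  apply Subtype.ext
  have hs : star (CFC.sqrt (a : H →L[ℂ] H)) = CFC.sqrt (a : H →L[ℂ] H) :=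
    (IsSelfAdjoint.of_nonneg (CFC.sqrt_nonneg _)).star_eq
  change (a : H →L[ℂ] H) = star (CFC.sqrt (a : H →L[ℂ] H)) * CFC.sqrt (a : H →L[ℂ] H)
  rw [hs, CFC.sqrt_mul_sqrt_self _ h0]

lemma vn_nonneg {f : ↥M →ₗ[ℂ] ℂ} (hf : VNIsPos f) (a : ↥M) (ha : (a : H →L[ℂ] H).IsPositive) :
    0 ≤ f a := by
  obtain ⟨w, rfl⟩ := vn_exists_sqrt a ha
  exact hf w

lemma vnle_apply {f g : ↥M →ₗ[ℂ] ℂ} (h : VNLE f g) (x : ↥M) :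
    f (star x * x) ≤ g (star x * x) := by
  have := h x
  simpa using this

lemma vnle_of {f g : ↥M →ₗ[ℂ] ℂ} (h : ∀ x : ↥M, f (star x * x) ≤ g (star x * x)) : VNLE f g := by
  intro x
  simpa using h x

lemma vn_normal_of_le {p f : ↥M →ₗ[ℂ] ℂ} (hp : VNIsPos p) (hn : VNIsNormal f) (h : VNLE p f) :
    VNIsNormal p := by
  intro ι _ _ _ x xs h1 h2 h3 h4 h5
  have hf := hn ι x xs h1 h2 h3 h4 h5
  constructor
  · rintro _ ⟨i, rfl⟩
    have := vn_nonneg hp (xs - x i) (by simpa [OpLE] using h4 i)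
    simpa using this
  · intro c hc
    have hub : f xs - p xs + c ∈ upperBounds (Set.range fun i => f (x i)) := by
      rintro _ ⟨i, rfl⟩
      have h6 : 0 ≤ (f - p) (xs - x i) := vn_nonneg h (xs - x i) (by simpa [OpLE] using h4 i)
      have h7 : p (x i) ≤ c := hc ⟨i, rfl⟩
      simp only [LinearMap.sub_apply, map_sub] at h6
      have h8 := add_le_add h6 h7
      change f (x i) ≤ _
      rw [← sub_nonneg] at h8 ⊢
      convert h8 using 1
      ring
    have h9 := hf.2 hub
    rw [← sub_nonneg] at h9 ⊢
    convert h9 using 1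
    ring

lemma vn_conj {f : ↥M →ₗ[ℂ] ℂ} (hf : VNIsPos f) (x y : ↥M) :
    star (f (star y * x)) = f (star x * y) := by
  have hr : ∀ z : ↥M, (f (star z * z)).im = 0 := fun z => (Complex.nonneg_iff.1 (hf z)).2.symm
  have h1 := hr (x + y)
  have h2 := hr (x + Complex.I • y)
  have h3 := hr x
  have h4 := hr y
  simp only [star_add, star_smul, mul_add, add_mul, map_add, map_smul, smul_mul_assoc,
    mul_smul_comm, smul_eq_mul, Complex.add_im, Complex.mul_im, Complex.mul_re, Complex.I_re,
    Complex.I_im, Complex.star_def, Complex.conj_I, Complex.neg_re, Complex.neg_im] at h1 h2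
  apply Complex.ext
  · simp; linarith
  · simp; linarith

/-- The pre-Hilbert space of a functional. -/
def VNPre (_f : ↥M →ₗ[ℂ] ℂ) : Type := ↥M

instance (f : ↥M →ₗ[ℂ] ℂ) : AddCommGroup (VNPre f) := inferInstanceAs (AddCommGroup ↥M)
noncomputable instance (f : ↥M →ₗ[ℂ] ℂ) : Module ℂ (VNPre f) := inferInstanceAs (Module ℂ ↥M)

/-- Identity map. -/
noncomputable def vnOf (f : ↥M →ₗ[ℂ] ℂ) : VNPre f ≃ₗ[ℂ] ↥M := LinearEquiv.refl ℂ _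

/-- The pre-inner product. -/
noncomputable abbrev vnCore (f : ↥M →ₗ[ℂ] ℂ) (hf : VNIsPos f) :
    PreInnerProductSpace.Core ℂ (VNPre f) where
  inner a b := f (star (vnOf f a) * vnOf f b)
  conj_inner_symm x y := vn_conj hf _ _
  re_inner_nonneg _ := (Complex.nonneg_iff.1 (hf _)).1
  add_left _ _ _ := by rw [map_add, star_add, add_mul, map_add]
  smul_left _ _ _ := by simp

lemma vn_gns (f : ↥M →ₗ[ℂ] ℂ) (hf : VNIsPos f) :
    ∃ (K : Type) (_ : NormedAddCommGroup K) (_ : InnerProductSpace ℂ K) (_ : CompleteSpace K)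
      (j : ↥M →ₗ[ℂ] K), DenseRange j ∧ ∀ x y, inner ℂ (j x) (j y) = f (star x * y) := by
  let _ : SeminormedAddCommGroup (VNPre f) :=
    InnerProductSpace.Core.toSeminormedAddCommGroup (c := vnCore f hf)
  let _ : InnerProductSpace ℂ (VNPre f) := InnerProductSpace.ofCore (vnCore f hf)
  refine ⟨UniformSpace.Completion (VNPre f), inferInstance, inferInstance, inferInstance,
    (UniformSpace.Completion.toComplL (𝕜 := ℂ) (E := VNPre f)).toLinearMap ∘ₗ
      (vnOf f).symm.toLinearMap, ?_, ?_⟩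
  · have := (UniformSpace.Completion.denseRange_coe (α := VNPre f))
    exact this.comp (vnOf f).symm.surjective.denseRange (UniformSpace.Completion.continuous_coe _)
  · intro x y
    exact UniformSpace.Completion.inner_coe (𝕜 := ℂ) (E := VNPre f) _ _

section GNS

variable {K : Type} [NormedAddCommGroup K] [InnerProductSpace ℂ K] [CompleteSpace K]
  {h : ↥M →ₗ[ℂ] ℂ} {j : ↥M →ₗ[ℂ] K}

lemma vn_norm_sq (hj : ∀ x y, inner ℂ (j x) (j y) = h (star x * y)) (x : ↥M) :
    ((‖j x‖ ^ 2 : ℝ) : ℂ) = h (star x * x) := by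
  rw [← hj, inner_self_eq_norm_sq_to_K]; simp

/-- Left multiplication extends to the GNS space. -/
lemma vn_exists_pi (hh : VNIsPos h) (hd : DenseRange j)
    (hj : ∀ x y, inner ℂ (j x) (j y) = h (star x * y)) (z : ↥M) :
    ∃ T : K →L[ℂ] K, ∀ x, T (j x) = j (z * x) := by
  refine ⟨(j ∘ₗ LinearMap.mulLeft ℂ z).extendOfNorm j, fun x => ?_⟩
  rw [LinearMap.extendOfNorm_eq hd]
  · simp
  refine ⟨‖(z : H →L[ℂ] H)‖, fun x => ?_⟩
  rw [← sq_le_sq₀ (by positivity) (by positivity), mul_pow, ← Complex.real_le_real,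
    Complex.ofReal_mul, vn_norm_sq hj]
  simp only [LinearMap.comp_apply, LinearMap.mulLeft_apply]
  rw [vn_norm_sq hj, ← sub_nonneg]
  have hp : ((((‖(z : H →L[ℂ] H)‖ ^ 2 : ℝ) : ℂ) • (1 : ↥M) - star z * z : ↥M) :
      H →L[ℂ] H).IsPositive := by
    have hz := CStarAlgebra.star_mul_le_algebraMap_norm_sq (a := (z : H →L[ℂ] H))
    rw [ContinuousLinearMap.le_def] at hz
    convert hz using 1
    ext v
    simp only [Algebra.algebraMap_eq_smul_one]
    simp
    rw [← Complex.ofReal_pow, Complex.coe_smul]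
  obtain ⟨w, hw⟩ := vn_exists_sqrt _ hp
  have := hh (w * x)
  have e : star (w * x) * (w * x) = star x * (star w * w) * x := by simp [mul_assoc]
  rw [e, ← hw] at this
  simp only [mul_sub, sub_mul, map_sub, mul_smul_comm, smul_mul_assoc, mul_one, map_smul,
    smul_eq_mul] at this
  convert this using 3
  simp [mul_assoc]

/-- A positive functional dominated by `h` is represented by a positive operator. -/
lemma vn_exists_op (hd : DenseRange j)
    (hj : ∀ x y, inner ℂ (j x) (j y) = h (star x * y)) {p : ↥M →ₗ[ℂ] ℂ} (hp : VNIsPos p)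
    (hle : VNLE p h) :
    ∃ C : K →L[ℂ] K, 0 ≤ C ∧ ∀ x y, inner ℂ (j x) (C (j y)) = p (star x * y) := by
  obtain ⟨L, _, _, _, k, hkd, hk⟩ := vn_gns p hp
  have hV : ∀ x, (k.extendOfNorm j) (j x) = k x := by
    refine LinearMap.extendOfNorm_eq hd ⟨1, fun x => ?_⟩
    rw [one_mul, ← sq_le_sq₀ (by positivity) (by positivity), ← Complex.real_le_real,
      vn_norm_sq hj, vn_norm_sq hk]
    exact vnle_apply hle x
  set V := k.extendOfNorm j
  refine ⟨adjoint V ∘L V, (nonneg_iff_isPositive _).2 (isPositive_adjoint_comp_self V), ?_⟩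
  intro x y
  rw [ContinuousLinearMap.comp_apply, adjoint_inner_right, hV, hV, hk]

end GNS

section Operators

variable {K : Type} [NormedAddCommGroup K] [InnerProductSpace ℂ K] [CompleteSpace K]

lemma op_pow_nonneg {A : K →L[ℂ] K} (h0 : 0 ≤ A) (n : ℕ) : 0 ≤ A ^ n := by
  induction n with
  | zero => simp
  | succ n ih =>
    rw [pow_succ]
    exact Commute.mul_nonneg ih h0 ((Commute.refl A).pow_left n)

lemma op_comm {A : K →L[ℂ] K} (n : ℕ) : Commute (A ^ n) (1 - A) :=
  ((Commute.one_right A).sub_right (Commute.refl A)).pow_left n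

lemma op_pow_succ_le {A : K →L[ℂ] K} (h0 : 0 ≤ A) (h1 : A ≤ 1) (n : ℕ) : A ^ (n + 1) ≤ A ^ n := by
  have := Commute.mul_nonneg (op_pow_nonneg h0 n) (sub_nonneg.2 h1) (op_comm n)
  rw [mul_sub, mul_one, ← pow_succ] at this
  exact sub_nonneg.1 this

lemma op_diff_le {A : K →L[ℂ] K} (h0 : 0 ≤ A) (h1 : A ≤ 1) (n : ℕ) :
    A - A ^ (n + 1) ≤ n • (1 - A) := by
  induction n with
  | zero => simp
  | succ n ih =>
    have hB := sub_nonneg.2 h1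
    have hp1 : A ^ (n + 1) ≤ 1 := by
      clear ih
      induction n with
      | zero => simpa using h1
      | succ n ih => exact (op_pow_succ_le h0 h1 _).trans ih
    have := Commute.mul_nonneg (sub_nonneg.2 hp1) hB
      ((Commute.one_left _).sub_left (op_comm (n + 1)))
    have e : A - A ^ (n + 1 + 1) = (A - A ^ (n + 1)) + A ^ (n + 1) * (1 - A) := by
      rw [pow_succ A (n + 1), mul_sub, mul_one]; abel
    rw [e, add_smul, one_smul]
    refine add_le_add ih ?_
    rw [sub_mul, one_mul] at this
    exact sub_nonneg.1 this

lemma op_inner_nonneg {T : K →L[ℂ] K} (h : 0 ≤ T) (v : K) : 0 ≤ inner ℂ v (T v) :=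
  ((nonneg_iff_isPositive _).1 h).inner_nonneg_right v

lemma op_symm {T : K →L[ℂ] K} (h : 0 ≤ T) (u v : K) : inner ℂ (T u) v = inner ℂ u (T v) :=
  ((nonneg_iff_isPositive _).1 h).isSymmetric u v

lemma op_inner_le {S T : K →L[ℂ] K} (h : S ≤ T) (v : K) : inner ℂ v (S v) ≤ inner ℂ v (T v) := by
  have := op_inner_nonneg (sub_nonneg.2 h) v
  simpa [inner_sub_right] using this

lemma op_pow_inner {A : K →L[ℂ] K} (h0 : 0 ≤ A) (v : K) (m n : ℕ) :
    inner ℂ ((A ^ m) v) ((A ^ n) v) = inner ℂ v ((A ^ (m + n)) v) := by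
  rw [op_symm (op_pow_nonneg h0 m), pow_add]; rfl

lemma op_limit {A : K →L[ℂ] K} (h0 : 0 ≤ A) (h1 : A ≤ 1) :
    ∃ P : K →ₗ[ℂ] K, (∀ v, Tendsto (fun n : ℕ => (A ^ n) v) atTop (𝓝 (P v))) ∧
      (∀ v, A (P v) = P v) ∧ ∀ v, inner ℂ v (P v) = inner ℂ (P v) (P v) := by
  have hcv : ∀ v, ∃ w, Tendsto (fun n : ℕ => (A ^ n) v) atTop (𝓝 w) := by
    intro v
    set a : ℕ → ℝ := fun n => (inner ℂ v ((A ^ n) v)).re with ha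
    have hanti : Antitone a := antitone_nat_of_succ_le fun n =>
      (Complex.le_def.1 (op_inner_le (op_pow_succ_le h0 h1 n) v)).1
    have hpos : ∀ n, 0 ≤ a n := fun n =>
      (Complex.le_def.1 (op_inner_nonneg (op_pow_nonneg h0 n) v)).1
    have hl := tendsto_atTop_ciInf hanti ⟨0, by rintro _ ⟨n, rfl⟩; exact hpos n⟩
    set l := ⨅ i, a i
    have hla : ∀ n, l ≤ a n := fun n => hanti.le_of_tendsto hl n
    have hd : ∀ m n, ‖(A ^ m) v - (A ^ n) v‖ ^ 2 = a (m + m) - 2 * a (m + n) + a (n + n) := by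
      intro m n
      rw [norm_sub_sq (𝕜 := ℂ), ← inner_self_eq_norm_sq (𝕜 := ℂ), ← inner_self_eq_norm_sq (𝕜 := ℂ)]
      simp only [op_pow_inner h0]
      rfl
    apply cauchySeq_tendsto_of_complete
    rw [Metric.cauchySeq_iff]
    intro ε hε
    have hev : ∀ᶠ n in atTop, a n < l + ε ^ 2 / 2 :=
      hl.eventually (gt_mem_nhds (by have : 0 < ε ^ 2 := by positivity
                                     linarith))
    obtain ⟨N, hN⟩ := eventually_atTop.1 hev
    refine ⟨N, fun m hm n hn => ?_⟩
    rw [dist_eq_norm]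
    refine lt_of_pow_lt_pow_left₀ 2 hε.le ?_
    rw [hd]
    have e1 := hN (m + m) (by omega)
    have e2 := hN (n + n) (by omega)
    have e3 := hla (m + n)
    linarith
  choose w hw using hcv
  let P : K →ₗ[ℂ] K := linearMapOfTendsto w (fun n : ℕ => ((A ^ n : K →L[ℂ] K) : K →ₗ[ℂ] K))
    (tendsto_pi_nhds.2 hw)
  have hP : ∀ v, Tendsto (fun n : ℕ => (A ^ n) v) atTop (𝓝 (P v)) := hw
  refine ⟨P, hP, fun v => ?_, fun v => ?_⟩
  · have h2 : Tendsto (fun n : ℕ => A ((A ^ n) v)) atTop (𝓝 (A (P v))) :=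
      (A.continuous.tendsto _).comp (hP v)
    have h3 : Tendsto (fun n : ℕ => A ((A ^ n) v)) atTop (𝓝 (P v)) := by
      refine ((hP v).comp (tendsto_add_atTop_nat 1)).congr fun n => ?_
      change (A ^ (n + 1)) v = _
      rw [pow_succ']; rfl
    exact tendsto_nhds_unique h2 h3
  · have h2 : Tendsto (fun n : ℕ => inner ℂ ((A ^ n) v) ((A ^ n) v)) atTop
      (𝓝 (inner ℂ (P v) (P v))) := (hP v).inner (hP v)
    have h3 : Tendsto (fun n : ℕ => inner ℂ ((A ^ n) v) ((A ^ n) v)) atTop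
      (𝓝 (inner ℂ v (P v))) := by
      have h4 : Tendsto (fun n : ℕ => n + n) atTop atTop :=
        tendsto_atTop_mono (fun n => Nat.le_add_left n n) tendsto_id
      refine (tendsto_const_nhds.inner ((hP v).comp h4)).congr fun n => ?_
      exact (op_pow_inner h0 v n n).symm
    exact tendsto_nhds_unique h3 h2

end Operators

/-- Closability of `f` with respect to `g`. -/
def VNClosable (f g : ↥M →ₗ[ℂ] ℂ) : Prop :=
  ∀ y : ℕ → ↥M, Tendsto (fun n => g (star (y n) * y n)) atTop (𝓝 0) →
    (∀ ε : ℝ, 0 < ε → ∃ N, ∀ m n, N ≤ m → N ≤ n →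
      (f (star (y n - y m) * (y n - y m))).re ≤ ε) →
    Tendsto (fun n => f (star (y n) * y n)) atTop (𝓝 0)

lemma vn_pos_smul {g : ↥M →ₗ[ℂ] ℂ} (hg : VNIsPos g) {c : ℝ} (hc : 0 ≤ c) :
    VNIsPos ((c : ℂ) • g) := by
  intro x
  rw [LinearMap.smul_apply, smul_eq_mul]
  exact mul_nonneg (Complex.zero_le_real.2 hc) (hg x)

set_option maxHeartbeats 2000000 in
lemma vn_decomp {f g : ↥M →ₗ[ℂ] ℂ} (hf : VNIsPos f) (hfn : VNIsNormal f) (hg : VNIsPos g) :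
    ∃ r s : ↥M →ₗ[ℂ] ℂ, VNIsPos r ∧ VNIsPos s ∧ f = r + s ∧ VNAbsCont r g ∧
      (∀ (p : ↥M →ₗ[ℂ] ℂ) (α : ℝ), 0 ≤ α → VNIsPos p → VNLE p f → VNLE p ((α : ℂ) • g) →
        VNLE p r) ∧
      (VNClosable f g → s = 0) := by
  have hh : VNIsPos (f + g) := fun x => add_nonneg (hf x) (hg x)
  have hle : VNLE f (f + g) := vnle_of fun x => by simpa using hg x
  obtain ⟨K, _, _, _, j, hd, hj⟩ := vn_gns (f + g) hh
  obtain ⟨A, h0, hA⟩ := vn_exists_op hd hj hf hle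
  choose π hπ using vn_exists_pi hh hd hj
  -- `B = 1 - A` represents `g`
  have hB : ∀ x y, inner ℂ (j x) ((1 - A) (j y)) = g (star x * y) := by
    intro x y
    simp [inner_sub_right, hj, hA]
  -- density arguments
  have dense1 : ∀ (P : K → Prop), IsClosed {v | P v} → (∀ x, P (j x)) → ∀ v, P v :=
    fun P hc hx v => hd.induction_on v hc hx
  have hpos : ∀ T : K →L[ℂ] K, T.IsSymmetric → (∀ x, 0 ≤ (inner ℂ (j x) (T (j x))).re) → 0 ≤ T := by
    intro T hT hx
    rw [nonneg_iff_isPositive, isPositive_def]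
    refine ⟨hT, ?_⟩
    refine dense1 _ ?_ ?_
    · exact isClosed_le continuous_const (by unfold reApplyInnerSelf; fun_prop)
    · intro x
      rw [reApplyInnerSelf_apply, hT.apply_clm]
      exact hx x
  have hBsymm : (1 - A : K →L[ℂ] K).IsSymmetric := by
    intro u v
    simp [inner_sub_left, inner_sub_right, op_symm h0]
  have h1 : A ≤ 1 := by
    refine sub_nonneg.1 (hpos _ hBsymm fun x => ?_)
    rw [hB]
    exact (Complex.le_def.1 (hg x)).1
  -- the adjoint relation for `π`
  have hπadj : ∀ z u v, inner ℂ (π z u) v = inner ℂ u (π (star z) v) := by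
    intro z u v
    refine dense1 (fun u => inner ℂ (π z u) v = inner ℂ u (π (star z) v))
      (isClosed_eq (by fun_prop) (by fun_prop)) (fun x => ?_) u
    refine dense1 (fun v => inner ℂ (π z (j x)) v = inner ℂ (j x) (π (star z) v))
      (isClosed_eq (by fun_prop) (by fun_prop)) (fun y => ?_) v
    simp only [hπ, hj, star_mul, mul_assoc]
  have hcomm : ∀ z v, A (π z v) = π z (A v) := by
    intro z v
    refine dense1 (fun v => A (π z v) = π z (A v))
      (isClosed_eq (by fun_prop) (by fun_prop)) (fun y => ?_) v
    refine ext_inner_left ℂ fun u => ?_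
    refine dense1 (fun u => inner ℂ u (A (π z (j y))) = inner ℂ u (π z (A (j y))))
      (isClosed_eq (by fun_prop) (by fun_prop)) (fun x => ?_) u
    have e := hπadj (star z) (j x) (A (j y))
    rw [star_star] at e
    rw [← e, hπ, hπ, hA, hA]
    simp [mul_assoc]
  have hcommn : ∀ (n : ℕ) z v, (A ^ n) (π z v) = π z ((A ^ n) v) := by
    intro n
    induction n with
    | zero => simp
    | succ n ih => intro z v; simp [pow_succ, hcomm, ih]
  -- the functionals
  let F : ℕ → (↥M →ₗ[ℂ] ℂ) := fun n =>
    (innerSL ℂ (j 1)).toLinearMap ∘ₗ (A - A ^ (n + 1) : K →L[ℂ] K).toLinearMap ∘ₗ j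
  have hj1 : ∀ x v, inner ℂ (j 1) (π (star x) v) = inner ℂ (j x) v := by
    intro x v
    rw [← hπadj, hπ, mul_one]
  have hF : ∀ n x y, F n (star x * y) = inner ℂ (j x) ((A - A ^ (n + 1)) (j y)) := by
    intro n x y
    change inner ℂ (j 1) ((A - A ^ (n + 1)) (j (star x * y))) = _
    rw [← hπ, sub_apply, hcomm, hcommn, ← map_sub, hj1]
    rfl
  obtain ⟨P, hP, hAP, hPP⟩ := op_limit h0 h1
  let s : ↥M →ₗ[ℂ] ℂ := (innerSL ℂ (j 1)).toLinearMap ∘ₗ P ∘ₗ j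
  have hs1 : ∀ x, s x = inner ℂ (j 1) (P (j x)) := fun x => rfl
  have hPcomm : ∀ z v, P (π z v) = π z (P v) := by
    intro z v
    have e1 := hP (π z v)
    simp only [hcommn] at e1
    exact tendsto_nhds_unique e1 (((π z).continuous.tendsto _).comp (hP v))
  have hs : ∀ x y, s (star x * y) = inner ℂ (j x) (P (j y)) := by
    intro x y
    rw [hs1, ← hπ, hPcomm, hj1]
  have hf1 : ∀ x, f x = inner ℂ (j 1) (A (j x)) := by
    intro x; rw [hA]; simp
  have hlim : ∀ x, Tendsto (fun n => F n x) atTop (𝓝 ((f - s) x)) := by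
    intro x
    rw [LinearMap.sub_apply, hf1, hs1, ← inner_sub_right]
    exact tendsto_const_nhds.inner
      (tendsto_const_nhds.sub ((hP (j x)).comp (tendsto_add_atTop_nat 1)))
  have hFpos : ∀ n, VNIsPos (F n) := by
    intro n x
    rw [hF]
    refine op_inner_nonneg (sub_nonneg.2 ?_) _
    induction n with
    | zero => simp
    | succ n ih => exact (op_pow_succ_le h0 h1 _).trans ih
  have hFle : ∀ n, VNLE (F n) f := by
    intro n
    refine vnle_of fun x => ?_
    rw [hF, ← hA]
    exact op_inner_le (sub_le_self _ (op_pow_nonneg h0 _)) _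
  have hrpos : VNIsPos (f - s) := fun x => by
    exact ge_of_tendsto' (hlim (star x * x)) fun n => hFpos n x
  have hspos : VNIsPos s := by
    intro x
    rw [hs, hPP]
    exact op_inner_nonneg (T := 1) zero_le_one _
  refine ⟨f - s, s, hrpos, hspos, by simp, ?_, ?_, ?_⟩
  · refine ⟨F, fun n => n + 1, fun n => ⟨hFpos n, vn_normal_of_le (hFpos n) hfn (hFle n)⟩,
      fun n => by positivity, fun n => vnle_of fun x => ?_, fun n => vnle_of fun x => ?_, hlim⟩
    · rw [hF, hF]
      exact op_inner_le (sub_le_sub_left (op_pow_succ_le h0 h1 _) _) _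
    · rw [hF, LinearMap.smul_apply, ← hB]
      refine (op_inner_le (op_diff_le h0 h1 n) _).trans ?_
      have hb := op_inner_nonneg (sub_nonneg.2 h1) (j x)
      have e : inner ℂ (j x) ((n • (1 - A)) (j x)) = (n : ℂ) * inner ℂ (j x) ((1 - A) (j x)) := by
        rw [← Nat.cast_smul_eq_nsmul ℂ, ContinuousLinearMap.smul_apply, inner_smul_right]
      rw [e, smul_eq_mul]
      push_cast
      rw [add_mul, one_mul]
      exact le_add_of_nonneg_right hb
  · intro p α hα hp hpf hpg
    have hph : VNLE p (f + g) := vnle_of fun x =>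
      (vnle_apply hpf x).trans (vnle_apply hle x)
    obtain ⟨C, hC0, hC⟩ := vn_exists_op hd hj hp hph
    have hCA : C ≤ A := by
      refine sub_nonneg.1 (hpos _ (fun u v => ?_) fun x => ?_)
      · simp [inner_sub_left, inner_sub_right, op_symm h0, op_symm hC0]
      · have := vnle_apply hpf x
        rw [← hC, ← hA] at this
        have := (Complex.le_def.1 this).1
        simpa [inner_sub_right] using this
    have hCB : C ≤ (α : ℂ) • (1 - A) := by
      refine sub_nonneg.1 (hpos _ (fun u v => ?_) fun x => ?_)
      · simp [inner_sub_left, inner_sub_right, inner_smul_left, inner_smul_right, op_symm h0,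
          op_symm hC0]
      · have := vnle_apply hpg x
        rw [LinearMap.smul_apply, ← hC, ← hB] at this
        have := (Complex.le_def.1 this).1
        rw [sub_apply, ContinuousLinearMap.smul_apply, inner_sub_right,
          inner_smul_right, Complex.sub_re]
        exact sub_nonneg.2 this
    have hCP : ∀ v, C (P v) = 0 := by
      intro v
      have e1 := op_inner_le hCB (P v)
      have e2 : ((α : ℂ) • (1 - A)) (P v) = 0 := by simp [hAP]
      rw [e2, inner_zero_right] at e1
      have e3 := le_antisymm e1 (op_inner_nonneg hC0 _)
      obtain ⟨S, hS⟩ := (CStarAlgebra.nonneg_iff_eq_star_mul_self).1 hC0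
      have e4 : S (P v) = 0 := by
        rw [← inner_self_eq_zero (𝕜 := ℂ), ← e3, hS, ContinuousLinearMap.mul_apply,
          ContinuousLinearMap.star_eq_adjoint, adjoint_inner_right]
      rw [hS, ContinuousLinearMap.mul_apply, e4, map_zero]
    refine vnle_of fun x => ?_
    rw [LinearMap.sub_apply, ← hC, ← hA, hs]
    have e := op_inner_le hCA (j x - P (j x))
    have e5 : inner ℂ (P (j x)) (C (j x)) = 0 := by
      rw [← op_symm hC0, hCP, inner_zero_left]
    have e6 : inner ℂ (P (j x)) (A (j x)) = inner ℂ (j x) (P (j x)) := by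
      rw [← op_symm h0, hAP, hPP, ← inner_conj_symm, hPP, inner_conj_symm]
    simp only [map_sub, inner_sub_left, inner_sub_right, hCP, hAP, inner_zero_right, sub_zero,
      e5, e6, ← hPP, sub_self] at e
    exact e
  · intro hcl
    ext x
    suffices hPx : P (j x) = 0 by rw [hs1, hPx]; simp
    set w := P (j x)
    obtain ⟨y, hy⟩ : ∃ y : ℕ → ↥M, Tendsto (fun n => j (y n)) atTop (𝓝 w) := by
      obtain ⟨u, hu, hlimu⟩ := mem_closure_iff_seq_limit.1 (hd w)
      choose y hy using hu
      exact ⟨y, by simpa only [hy] using hlimu⟩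
    have c1 : Tendsto (fun n => g (star (y n) * y n)) atTop (𝓝 0) := by
      simp only [← hB]
      have hz : (1 - A) w = 0 := by simp [w, hAP]
      have := hy.inner (((1 - A).continuous.tendsto _).comp hy) (𝕜 := ℂ)
      rw [hz, inner_zero_right] at this
      exact this
    have c2 : Tendsto (fun n => f (star (y n) * y n)) atTop (𝓝 (inner ℂ w w)) := by
      simp only [← hA]
      have := hy.inner ((A.continuous.tendsto _).comp hy) (𝕜 := ℂ)
      simpa [w, hAP] using this
    have c3 := hcl y c1 (by
      intro ε hε
      obtain ⟨N, hN⟩ := Metric.cauchySeq_iff.1 hy.cauchySeq (√ε) (by positivity)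
      refine ⟨N, fun m n hm hn => ?_⟩
      have e1 := hN n hn m hm
      rw [dist_eq_norm, ← map_sub] at e1
      have e2 := (vnle_apply hle (y n - y m))
      rw [← vn_norm_sq hj] at e2
      have e3 := (Complex.le_def.1 e2).1
      rw [Complex.ofReal_re] at e3
      refine e3.trans ?_
      exact ((Real.lt_sqrt (norm_nonneg _)).1 e1).le)
    exact inner_self_eq_zero.1 (tendsto_nhds_unique c2 c3)

lemma vn_quad {p : ↥M →ₗ[ℂ] ℂ} (hp : VNIsPos p) (a b : ↥M) :
    (p (star a * a)).re ≤ 2 * (p (star (a - b) * (a - b))).re + 2 * (p (star b * b)).re := by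
  have h := (Complex.le_def.1 (hp (a - b - b))).1
  simp only [star_sub, mul_sub, sub_mul, map_sub, Complex.sub_re, Complex.zero_re] at h ⊢
  linarith

lemma vnle_of_tendsto {F : ℕ → (↥M →ₗ[ℂ] ℂ)} {f : ↥M →ₗ[ℂ] ℂ}
    (hmono : ∀ n, VNLE (F n) (F (n + 1)))
    (hlim : ∀ x : ↥M, Tendsto (fun n => F n x) atTop (𝓝 (f x))) (n : ℕ) : VNLE (F n) f := by
  refine vnle_of fun x => ?_
  exact (monotone_nat_of_le_succ fun n => vnle_apply (hmono n) x).ge_of_tendsto (hlim _) n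

lemma vn_closable {f f' g : ↥M →ₗ[ℂ] ℂ} (hg : VNIsPos g) (hf' : VNIsPos f')
    (hac : VNAbsCont f g) (h1 : VNLE f' f) (h2 : VNLE f ((2 : ℂ) • f')) : VNClosable f' g := by
  obtain ⟨F, α, hF, hα, hmono, hFg, hlim⟩ := hac
  have hFf := vnle_of_tendsto hmono hlim
  intro y hy hc
  have key : ∀ ε : ℝ, 0 < ε → ∃ N, ∀ n, N ≤ n → (f' (star (y n) * y n)).re ≤ ε := by
    intro ε hε
    obtain ⟨N, hN⟩ := hc (ε / 4) (by positivity)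
    refine ⟨N, fun n hn => ?_⟩
    have hk : ∀ k, (F k (star (y n) * y n)).re ≤ ε := by
      intro k
      have hb : ∀ m, N ≤ m → (F k (star (y n) * y n)).re ≤
          ε + 2 * (α k * (g (star (y m) * y m)).re) := by
        intro m hm
        have e1 := vn_quad (hF k).1 (y n) (y m)
        have e2 := (Complex.le_def.1 (vnle_apply (hFf k) (y n - y m))).1
        have e3 := (Complex.le_def.1 (vnle_apply h2 (y n - y m))).1
        have e4 := hN m n hm hn
        have e5 := (Complex.le_def.1 (vnle_apply (hFg k) (y m))).1
        simp only [LinearMap.smul_apply, smul_eq_mul, Complex.re_ofReal_mul] at e5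
        simp only [LinearMap.smul_apply, smul_eq_mul, Complex.mul_re, Complex.re_ofNat,
          Complex.im_ofNat, zero_mul, sub_zero] at e3
        linarith
      have hl : Tendsto (fun m => ε + 2 * (α k * (g (star (y m) * y m)).re)) atTop
          (𝓝 (ε + 2 * (α k * 0))) := by
        have : Tendsto (fun m => (g (star (y m) * y m)).re) atTop (𝓝 0) := by
          have e := (Complex.continuous_re.tendsto _).comp hy
          rw [Complex.zero_re] at e
          exact e
        exact tendsto_const_nhds.add ((this.const_mul _).const_mul _)
      have := ge_of_tendsto hl (eventually_atTop.2 ⟨N, hb⟩)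
      simpa using this
    have e6 := le_of_tendsto' ((Complex.continuous_re.tendsto _).comp (hlim (star (y n) * y n))) hk
    exact (Complex.le_def.1 (vnle_apply h1 (y n))).1.trans e6
  have him : ∀ n, f' (star (y n) * y n) = (((f' (star (y n) * y n)).re : ℝ) : ℂ) := fun n =>
    Complex.ext (by simp) (by simpa using (Complex.le_def.1 (hf' (y n))).2.symm)
  have hre : Tendsto (fun n => (f' (star (y n) * y n)).re) atTop (𝓝 0) := by
    rw [Metric.tendsto_atTop]
    intro ε hε
    obtain ⟨N, hN⟩ := key (ε / 2) (by positivity)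
    refine ⟨N, fun n hn => ?_⟩
    have := hN n hn
    have h0 := (Complex.le_def.1 (hf' (y n))).1
    rw [Complex.zero_re] at h0
    rw [Real.dist_eq, sub_zero, abs_of_nonneg h0]
    linarith
  have := (Complex.continuous_ofReal.tendsto _).comp hre
  rw [Complex.ofReal_zero] at this
  exact this.congr fun n => (him n).symm

/-- A positive functional with `p (x⋆ x) = 0` for all `x` vanishes. -/
lemma vn_zero {p : ↥M →ₗ[ℂ] ℂ} (h : ∀ x : ↥M, p (star x * x) = 0) : p = 0 := by
  have hpos : VNIsPos p := fun x => (h x).ge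
  ext x
  have h1 := h (1 + x)
  have h2 := h (1 + Complex.I • x)
  have h3 := h 1
  have h4 := h x
  simp only [star_add, star_smul, mul_add, add_mul, map_add, map_smul, smul_mul_assoc,
    mul_smul_comm, smul_eq_mul, star_one, one_mul, mul_one, h4, Complex.star_def,
    Complex.conj_I] at h1 h2 h3
  have h5 : Complex.I * (2 * p x) = 0 := by
    linear_combination h2 - (1 + Complex.I) * h3 + Complex.I * h1
  simpa using h5

lemma vn_le_antisymm {f g : ↥M →ₗ[ℂ] ℂ} (h1 : VNLE f g) (h2 : VNLE g f) : f = g := by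
  have : f - g = 0 := vn_zero fun x => by
    rw [LinearMap.sub_apply, sub_eq_zero]
    exact le_antisymm (vnle_apply h1 x) (vnle_apply h2 x)
  exact sub_eq_zero.1 this

/-- Singular and dominated implies zero. -/
lemma vn_sing_zero {s g p : ↥M →ₗ[ℂ] ℂ} (hs : VNSingular s g) (hp : VNIsPos p)
    (hpn : VNIsNormal p) (hps : VNLE p s) {α : ℝ} (hα : 0 < α) (hg : VNIsPos g)
    (hpg : VNLE p ((α : ℂ) • g)) : p = 0 := by
  set c : ℝ := (1 + α)⁻¹ with hc
  have hc0 : 0 < c := by positivity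
  have hcp := vn_pos_smul hp hc0.le
  have hcle : c ≤ 1 := inv_le_one_of_one_le₀ (by linarith)
  have hcα : c * α ≤ 1 := by
    rw [hc, inv_mul_le_iff₀ (by positivity)]; linarith
  have hle1 : VNLE ((c : ℂ) • p) p := vnle_of fun x => by
    rw [LinearMap.smul_apply, smul_eq_mul]
    exact mul_le_of_le_one_left (hp x) (by exact_mod_cast hcle)
  have h0 := hs ((c : ℂ) • p) hcp (vn_normal_of_le hcp hpn hle1)
    (vnle_of fun x => (vnle_apply hle1 x).trans (vnle_apply hps x))
    (vnle_of fun x => by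
      have e := vnle_apply hpg x
      rw [LinearMap.smul_apply, smul_eq_mul] at e ⊢
      calc (c : ℂ) * p (star x * x) ≤ (c : ℂ) * (α * g (star x * x)) :=
            mul_le_mul_of_nonneg_left e (by exact_mod_cast hc0.le)
        _ = ((c * α : ℝ) : ℂ) * g (star x * x) := by push_cast; ring
        _ ≤ g (star x * x) := mul_le_of_le_one_left (hg x) (by exact_mod_cast hcα))
  rcases smul_eq_zero.1 h0 with h | h
  · exact absurd (by exact_mod_cast h) hc0.ne'
  · exact h

lemma vnle_trans {f g k : ↥M →ₗ[ℂ] ℂ} (h1 : VNLE f g) (h2 : VNLE g k) : VNLE f k :=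
  vnle_of fun x => (vnle_apply h1 x).trans (vnle_apply h2 x)

/-- Existence of the Lebesgue decomposition, with extra information. -/
lemma vn_lebesgue {f g : ↥M →ₗ[ℂ] ℂ} (hf : VNIsPos f) (hfn : VNIsNormal f) (hg : VNIsPos g) :
    ∃ r s : ↥M →ₗ[ℂ] ℂ, VNIsLebDecomp f g r s ∧
      (∀ p : ↥M →ₗ[ℂ] ℂ, VNLE p f → VNAbsCont p g → VNLE p r) ∧
      (VNClosable f g → s = 0) := by
  obtain ⟨r, s, hr, hs, rfl, hac, hmax, hcl⟩ := vn_decomp hf hfn hg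
  have hrle : VNLE r (r + s) := vnle_of fun x => by simpa using hs x
  have hsle : VNLE s (r + s) := vnle_of fun x => by simpa using hr x
  refine ⟨r, s, ⟨hr, vn_normal_of_le hr hfn hrle, hs, vn_normal_of_le hs hfn hsle, rfl, hac, ?_⟩,
    ?_, hcl⟩
  · intro p hp hpn hps hpg
    obtain ⟨F, α, hF, hα, hmono, hFg, hlim⟩ := hac
    have hFr := vnle_of_tendsto hmono hlim
    have h1 : ∀ n, VNLE (p + F n) r := by
      intro n
      refine hmax _ (1 + α n) (by have := hα n; linarith) (fun x => ?_) (vnle_of fun x => ?_)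
        (vnle_of fun x => ?_)
      · exact add_nonneg (hp x) ((hF n).1 x)
      · rw [LinearMap.add_apply, LinearMap.add_apply, add_comm]
        exact add_le_add (vnle_apply (hFr n) x) (vnle_apply hps x)
      · have := add_le_add (vnle_apply hpg x) (vnle_apply (hFg n) x)
        refine this.trans (le_of_eq ?_)
        simp [add_mul]
    have h2 : VNLE (p + r) r := vnle_of fun x => by
      have hl : Tendsto (fun n => (p + F n) (star x * x)) atTop (𝓝 ((p + r) (star x * x))) :=
        tendsto_const_nhds.add (hlim _)
      exact le_of_tendsto' hl fun n => vnle_apply (h1 n) x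
    refine vn_zero fun x => le_antisymm ?_ (hp x)
    simpa using vnle_apply h2 x
  · rintro p hpf ⟨F, α, hF, hα, hmono, hFg, hlim⟩
    have hFp := vnle_of_tendsto hmono hlim
    refine vnle_of fun x => le_of_tendsto' (hlim _) fun n => ?_
    exact vnle_apply (hmax _ (α n) (hα n).le (hF n).1 (vnle_trans (hFp n) hpf) (hFg n)) x

lemma vn_absCont_sing {u s g : ↥M →ₗ[ℂ] ℂ} (hg : VNIsPos g) (hus : VNLE u s)
    (hac : VNAbsCont u g) (hs : VNSingular s g) : u = 0 := by
  obtain ⟨F, α, hF, hα, hmono, hFg, hlim⟩ := hac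
  have hFu := vnle_of_tendsto hmono hlim
  have h0 : ∀ n, F n = 0 := fun n =>
    vn_sing_zero hs (hF n).1 (hF n).2 (vnle_trans (hFu n) hus) (hα n) hg (hFg n)
  ext x
  refine tendsto_nhds_unique (hlim x) ?_
  simp [h0]

/-- Under (ii), the absolutely continuous part is the maximal one. -/
lemma vn_unique_aux (hii : ∀ t f g : ↥M →ₗ[ℂ] ℂ,
        VNIsPos t → VNIsNormal t → VNIsPos f → VNIsNormal f →
        VNIsPos g → VNIsNormal g → VNLE t f → VNAbsCont f g → VNAbsCont t g)
    {f g r s r₀ s₀ : ↥M →ₗ[ℂ] ℂ} (hg : VNIsPos g) (hgn : VNIsNormal g)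
    (h : VNIsLebDecomp f g r s) (h₀ : VNIsLebDecomp f g r₀ s₀) (hmax : VNLE r r₀) : r = r₀ := by
  obtain ⟨hr, hrn, hs, hsn, rfl, hac, hsing⟩ := h
  obtain ⟨hr₀, hrn₀, hs₀, hsn₀, he, hac₀, hsing₀⟩ := h₀
  have hle : VNLE (r₀ - r) r₀ := vnle_of fun x => by simpa using hr x
  have hu : VNAbsCont (r₀ - r) g :=
    hii (r₀ - r) r₀ g hmax (vn_normal_of_le hmax hrn₀ hle) hr₀ hrn₀ hg hgn hle hac₀
  have hus : VNLE (r₀ - r) s := vnle_of fun x => by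
    have e := LinearMap.congr_fun he (star x * x)
    have e2 := hs₀ x
    simp only [LinearMap.add_apply] at e
    rw [LinearMap.sub_apply, sub_le_iff_le_add', e]
    exact le_add_of_nonneg_right e2
  exact (sub_eq_zero.1 (vn_absCont_sing hg hus hu hsing)).symm

end Helpers

/-- **Lemma 2.12**: for a von Neumann algebra `M`, the Lebesgue decomposition of normal
positive functionals over `M` is unique iff `𝔱 ≤ 𝔣 ≪ 𝔤` implies `𝔱 ≪ 𝔤` for all normal
positive functionals `𝔱, 𝔣, 𝔤` on `M`. -/
theorem vN_lebesgue_unique_iff_le_absCont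
    {H : Type} [NormedAddCommGroup H] [InnerProductSpace ℂ H] [CompleteSpace H]
    (M : VonNeumannAlgebra H) :
    VNLebDecompUnique M ↔
      ∀ 𝔱 𝔣 𝔤 : ↥M →ₗ[ℂ] ℂ,
        VNIsPos 𝔱 → VNIsNormal 𝔱 → VNIsPos 𝔣 → VNIsNormal 𝔣 →
        VNIsPos 𝔤 → VNIsNormal 𝔤 →
        VNLE 𝔱 𝔣 → VNAbsCont 𝔣 𝔤 → VNAbsCont 𝔱 𝔤 := by
  constructor
  · intro huniq t f g ht htn hf hfn hg hgn htf hac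
    obtain ⟨r, w, hdec, -, -⟩ := vn_lebesgue ht htn hg
    obtain ⟨hr, hrn, hw, hwn, rfl, hrac, hsing⟩ := hdec
    have hwf : VNLE w f := vnle_trans (vnle_of fun x => by simpa using hr x) htf
    have hhw := vn_pos_smul hw (c := 1 / 2) (by norm_num)
    set v := (((1 / 2 : ℝ) : ℂ)) • w with hv
    have hvw : v + v = w := by
      rw [hv, ← add_smul]; norm_num
    have hvlew : VNLE v w := vnle_of fun x => by
      rw [← hvw]; simpa using hhw x
    have hvn : VNIsNormal v := vn_normal_of_le hhw hwn hvlew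
    have hvf : VNLE v f := vnle_trans hvlew hwf
    have hk : VNLE (f - v) f := vnle_of fun x => by simpa using hhw x
    have hk2 : VNLE f ((2 : ℂ) • (f - v)) := by
      have e : f - w = (2 : ℂ) • (f - v) - f := by
        rw [two_smul, ← hvw]; abel
      unfold VNLE
      rw [← e]
      exact hwf
    have hkn : VNIsNormal (f - v) := vn_normal_of_le hvf hfn hk
    obtain ⟨r', s', hdec', -, hcl⟩ := vn_lebesgue (f := f - v) hvf hkn hg
    have hs' := hcl (vn_closable hg hvf hac hk hk2)
    obtain ⟨-, -, -, -, he, hac', -⟩ := hdec'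
    rw [hs', add_zero] at he
    rw [← he] at hac'
    have hvsing : VNSingular v g := fun p hp hpn hpv hpg =>
      hsing p hp hpn (vnle_trans hpv hvlew) hpg
    have hzpos : VNIsPos (0 : ↥M →ₗ[ℂ] ℂ) := fun x => by simp
    have hzle : VNLE (0 : ↥M →ₗ[ℂ] ℂ) f := vnle_of fun x => by simpa using hf x
    have hzsing : VNSingular (0 : ↥M →ₗ[ℂ] ℂ) g := fun p hp _ hp0 _ =>
      vn_zero fun x => le_antisymm (by simpa using vnle_apply hp0 x) (hp x)
    have hu := (huniq f g hf hfn hg hgn (f - v) v f 0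
      ⟨hvf, hkn, hhw, hvn, by simp, hac', hvsing⟩
      ⟨hf, hfn, hzpos, vn_normal_of_le hzpos hfn hzle, by simp, hac, hzsing⟩).2
    have hw0 : w = 0 := by rw [← hvw, hu, add_zero]
    rw [hw0, add_zero]
    exact hrac
  · intro hii f g hf hfn hg hgn r s r' s' h h'
    obtain ⟨r₀, s₀, h₀, hmax, -⟩ := vn_lebesgue hf hfn hg
    have hrle : ∀ r s, VNIsLebDecomp f g r s → r = r₀ := by
      intro r s h
      refine vn_unique_aux hii hg hgn h h₀ (hmax r ?_ h.2.2.2.2.2.1)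
      obtain ⟨-, -, hs, -, rfl, -, -⟩ := h
      exact vnle_of fun x => by simpa using hs x
    have e : r = r' := (hrle r s h).trans (hrle r' s' h').symm
    refine ⟨e, ?_⟩
    have e1 := h.2.2.2.2.1
    have e2 := h'.2.2.2.2.1
    rw [e1, e] at e2
    exact add_left_cancel e2
end
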